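/- For every distortion pair (d1,d2) ∈ ℝ₊², the rate-distortion function satisfies the cut-set lower bound R(d1,d2) ≥ max{ R_{X|Y}(d1), R_{Y|X}(d2) }. -/

import Mathlib

open scoped BigOperators Classical

noncomputable section

namespace TWR

/-- Base-2 Shannon entropy of a finitely supported distribution (with the
convention `0 * log 0 = 0`, automatic since `Real.logb 2 0 = 0`). -/
def H2 {α : Type} [Fintype α] (p : α → ℝ) : ℝ :=
  -∑ a, p a * Real.logb 2 (p a)

/-- `p` is a probability mass function. -/
def IsPmf {α : Type} [Fintype α] (p : α → ℝ) : Prop :=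
  (∀ a, 0 ≤ p a) ∧ ∑ a, p a = 1

/-- `W` is a conditional pmf. -/
def IsCondPmf {α β : Type} [Fintype β] (W : α → β → ℝ) : Prop :=
  ∀ a, IsPmf (W a)

/-- Mutual information `I(A;B)` (base 2) of a joint pmf on `α × β`. -/
def MI {α β : Type} [Fintype α] [Fintype β] (p : α × β → ℝ) : ℝ :=
  H2 (fun a => ∑ b, p (a, b)) + H2 (fun b => ∑ a, p (a, b)) - H2 p

/-- Conditional entropy `H(A|B)` of a joint pmf on `α × β`. -/
def condH {α β : Type} [Fintype α] [Fintype β] (p : α × β → ℝ) : ℝ :=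
  H2 p - H2 (fun b => ∑ a, p (a, b))

/-- Conditional mutual information `I(A;C|B)` of a joint pmf on `α × β × γ`,
conditioning on the middle coordinate (`I(A;C|B) = H(A,B)+H(B,C)-H(A,B,C)-H(B)`). -/
def condMI {α β γ : Type} [Fintype α] [Fintype β] [Fintype γ] (p : α × β × γ → ℝ) : ℝ :=
  H2 (fun ab : α × β => ∑ c, p (ab.1, ab.2, c)) +
    H2 (fun bc : β × γ => ∑ a, p (a, bc.1, bc.2)) -
    H2 p - H2 (fun b : β => ∑ a, ∑ c, p (a, b, c))

/-- Markov chain `A − B − C` for a joint pmf on `α × β × γ`. -/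
def Markov {α β γ : Type} [Fintype α] [Fintype β] [Fintype γ] (p : α × β × γ → ℝ) : Prop :=
  ∀ a b c, p (a, b, c) * (∑ a', ∑ c', p (a', b, c')) =
    (∑ c', p (a, b, c')) * (∑ a', p (a', b, c))

variable {𝒳 𝒴 Xh Yh 𝒲 𝒰 𝒱 : Type}
variable [Fintype 𝒳] [Fintype 𝒴] [Fintype Xh] [Fintype Yh]
variable [Fintype 𝒲] [Fintype 𝒰] [Fintype 𝒱]

/-- The i.i.d. block source. -/
def iid (q : 𝒳 × 𝒴 → ℝ) (n : ℕ) : (Fin n → 𝒳) × (Fin n → 𝒴) → ℝ :=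
  fun xy => ∏ i, q (xy.1 i, xy.2 i)

/-- Average distortion at receiver 1 of the RD code `(f, g1, ·)`. -/
def Delta1 (q : 𝒳 × 𝒴 → ℝ) (δ1 : 𝒳 → Xh → ℝ) {n m : ℕ}
    (f : (Fin n → 𝒳) × (Fin n → 𝒴) → Fin m)
    (g1 : Fin m × (Fin n → 𝒴) → Fin n → Xh) : ℝ :=
  ∑ xy : (Fin n → 𝒳) × (Fin n → 𝒴),
    iid q n xy * ((n : ℝ)⁻¹ * ∑ i, δ1 (xy.1 i) (g1 (f xy, xy.2) i))

/-- Average distortion at receiver 2 of the RD code `(f, ·, g2)`. -/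
def Delta2 (q : 𝒳 × 𝒴 → ℝ) (δ2 : 𝒴 → Yh → ℝ) {n m : ℕ}
    (f : (Fin n → 𝒳) × (Fin n → 𝒴) → Fin m)
    (g2 : Fin m × (Fin n → 𝒳) → Fin n → Yh) : ℝ :=
  ∑ xy : (Fin n → 𝒳) × (Fin n → 𝒴),
    iid q n xy * ((n : ℝ)⁻¹ * ∑ i, δ2 (xy.2 i) (g2 (f xy, xy.1) i))

/-- `r` is a `(d1,d2)`-achievable rate (source coding). -/
def RDAchievable (q : 𝒳 × 𝒴 → ℝ) (δ1 : 𝒳 → Xh → ℝ) (δ2 : 𝒴 → Yh → ℝ)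
    (d1 d2 r : ℝ) : Prop :=
  ∀ ε > (0 : ℝ), ∃ (n m : ℕ) (f : (Fin n → 𝒳) × (Fin n → 𝒴) → Fin m)
    (g1 : Fin m × (Fin n → 𝒴) → Fin n → Xh)
    (g2 : Fin m × (Fin n → 𝒳) → Fin n → Yh),
    0 < n ∧ Real.logb 2 m / n ≤ r + ε ∧
    Delta1 q δ1 f g1 ≤ d1 + ε ∧ Delta2 q δ2 f g2 ≤ d2 + ε

/-- The rate-distortion function `R(d1,d2)`. -/
def RD (q : 𝒳 × 𝒴 → ℝ) (δ1 : 𝒳 → Xh → ℝ) (δ2 : 𝒴 → Yh → ℝ) (d1 d2 : ℝ) : ℝ :=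
  sInf {r : ℝ | 0 ≤ r ∧ RDAchievable q δ1 δ2 d1 d2 r}

/-- `r` is `(d1,d2)`-achievable with common reconstructions. -/
def CRAchievable (q : 𝒳 × 𝒴 → ℝ) (δ1 : 𝒳 → Xh → ℝ) (δ2 : 𝒴 → Yh → ℝ)
    (d1 d2 r : ℝ) : Prop :=
  ∀ ε > (0 : ℝ), ∃ (n m : ℕ) (f : (Fin n → 𝒳) × (Fin n → 𝒴) → Fin m)
    (g1 : Fin m × (Fin n → 𝒴) → Fin n → Xh)
    (g2 : Fin m × (Fin n → 𝒳) → Fin n → Yh)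
    (φ1 : Fin m × (Fin n → 𝒴) → Fin n → Yh)
    (φ2 : Fin m × (Fin n → 𝒳) → Fin n → Xh),
    0 < n ∧ Real.logb 2 m / n ≤ r + ε ∧
    Delta1 q δ1 f g1 ≤ d1 + ε ∧ Delta2 q δ2 f g2 ≤ d2 + ε ∧
    (∑ xy : (Fin n → 𝒳) × (Fin n → 𝒴),
      if φ2 (f xy, xy.1) = g1 (f xy, xy.2) then 0 else iid q n xy) ≤ ε ∧
    (∑ xy : (Fin n → 𝒳) × (Fin n → 𝒴),
      if φ1 (f xy, xy.2) = g2 (f xy, xy.1) then 0 else iid q n xy) ≤ ε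

/-- The common-reconstruction rate-distortion function `R_CR(d1,d2)`. -/
def CRRD (q : 𝒳 × 𝒴 → ℝ) (δ1 : 𝒳 → Xh → ℝ) (δ2 : 𝒴 → Yh → ℝ) (d1 d2 : ℝ) : ℝ :=
  sInf {r : ℝ | 0 ≤ r ∧ CRAchievable q δ1 δ2 d1 d2 r}

/-- The conditional rate-distortion function `R_{X|Y}(d1)`. -/
def condRD (q : 𝒳 × 𝒴 → ℝ) (δ1 : 𝒳 → Xh → ℝ) (d1 : ℝ) : ℝ :=
  sInf {r : ℝ | ∃ W : 𝒳 × 𝒴 → Xh → ℝ, IsCondPmf W ∧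
    (∑ x, ∑ y, ∑ xh, q (x, y) * W (x, y) xh * δ1 x xh) ≤ d1 ∧
    r = condMI (fun t : 𝒳 × 𝒴 × Xh => q (t.1, t.2.1) * W (t.1, t.2.1) t.2.2)}

/-- Swap the two components of a joint source. -/
def swap (q : 𝒳 × 𝒴 → ℝ) : 𝒴 × 𝒳 → ℝ := fun t => q (t.2, t.1)

/-- The marginal rate-distortion function `R_X(d)`. -/
def margRD (qX : 𝒳 → ℝ) (δ1 : 𝒳 → Xh → ℝ) (d1 : ℝ) : ℝ :=
  sInf {r : ℝ | ∃ W : 𝒳 → Xh → ℝ, IsCondPmf W ∧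
    (∑ x, ∑ xh, qX x * W x xh * δ1 x xh) ≤ d1 ∧
    r = MI (fun t : 𝒳 × Xh => qX t.1 * W t.1 t.2)}

def margX (q : 𝒳 × 𝒴 → ℝ) : 𝒳 → ℝ := fun x => ∑ y, q (x, y)
def margY (q : 𝒳 × 𝒴 → ℝ) : 𝒴 → ℝ := fun y => ∑ x, q (x, y)

/-- The joint rate-distortion function `R_{XY}(d1,d2)`. -/
def jointRD (q : 𝒳 × 𝒴 → ℝ) (δ1 : 𝒳 → Xh → ℝ) (δ2 : 𝒴 → Yh → ℝ) (d1 d2 : ℝ) : ℝ :=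
  sInf {r : ℝ | ∃ W : 𝒳 × 𝒴 → Xh × Yh → ℝ, IsCondPmf W ∧
    (∑ xy : 𝒳 × 𝒴, ∑ z : Xh × Yh, q xy * W xy z * δ1 xy.1 z.1) ≤ d1 ∧
    (∑ xy : 𝒳 × 𝒴, ∑ z : Xh × Yh, q xy * W xy z * δ2 xy.2 z.2) ≤ d2 ∧
    r = MI (fun t : (𝒳 × 𝒴) × (Xh × Yh) => q t.1 * W t.1 t.2)}

/-- The Wyner–Ziv rate-distortion function `R^{WZ}_{X|Y}(d1)`
(with auxiliary alphabet of cardinality `|𝒳| + 1`). -/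
def wzRD (q : 𝒳 × 𝒴 → ℝ) (δ1 : 𝒳 → Xh → ℝ) (d1 : ℝ) : ℝ :=
  sInf {r : ℝ | ∃ p : Fin (Fintype.card 𝒳 + 1) × 𝒳 × 𝒴 → ℝ, IsPmf p ∧
    (∀ x y, (∑ a, p (a, x, y)) = q (x, y)) ∧ Markov p ∧
    (∃ π1 : Fin (Fintype.card 𝒳 + 1) × 𝒴 → Xh,
      (∑ a, ∑ x, ∑ y, p (a, x, y) * δ1 x (π1 (a, y))) ≤ d1) ∧
    r = condMI (fun t : 𝒳 × 𝒴 × Fin (Fintype.card 𝒳 + 1) => p (t.2.2, t.1, t.2.1))}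

/-- The set over which the single-letter CR formula
`max{I(X;X̂,Ŷ|Y), I(Y;X̂,Ŷ|X)}` is minimised. -/
def crFormulaSet (q : 𝒳 × 𝒴 → ℝ) (δ1 : 𝒳 → Xh → ℝ) (δ2 : 𝒴 → Yh → ℝ)
    (d1 d2 : ℝ) : Set ℝ :=
  {r : ℝ | ∃ W : 𝒳 × 𝒴 → Xh × Yh → ℝ, IsCondPmf W ∧
    (∑ x, ∑ y, ∑ z : Xh × Yh, q (x, y) * W (x, y) z * δ1 x z.1) ≤ d1 ∧
    (∑ x, ∑ y, ∑ z : Xh × Yh, q (x, y) * W (x, y) z * δ2 y z.2) ≤ d2 ∧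
    r = max
      (condMI (fun t : 𝒳 × 𝒴 × (Xh × Yh) => q (t.1, t.2.1) * W (t.1, t.2.1) t.2.2))
      (condMI (fun t : 𝒴 × 𝒳 × (Xh × Yh) => q (t.2.1, t.1) * W (t.2.1, t.1) t.2.2))}

/-- Joint law of source blocks and channel outputs for a JSC encoder. -/
def jscP (q : 𝒳 × 𝒴 → ℝ) (qUV : 𝒲 → 𝒰 × 𝒱 → ℝ) {n m : ℕ}
    (f : (Fin n → 𝒳) × (Fin n → 𝒴) → Fin m → 𝒲)
    (x : Fin n → 𝒳) (y : Fin n → 𝒴) (u : Fin m → 𝒰) (v : Fin m → 𝒱) : ℝ :=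
  (∏ i, q (x i, y i)) * ∏ j, qUV (f (x, y) j) (u j, v j)

/-- `(d1,d2)` is achievable by joint source-channel coding with source rate `κs`
and channel rate `κc` (bandwidth expansion `κc/κs`). -/
def JSCAchievable (q : 𝒳 × 𝒴 → ℝ) (qUV : 𝒲 → 𝒰 × 𝒱 → ℝ)
    (δ1 : 𝒳 → Xh → ℝ) (δ2 : 𝒴 → Yh → ℝ) (κs κc d1 d2 : ℝ) : Prop :=
  ∀ ε > (0 : ℝ), ∃ (t n m : ℕ) (f : (Fin n → 𝒳) × (Fin n → 𝒴) → Fin m → 𝒲)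
    (g1 : (Fin m → 𝒰) × (Fin n → 𝒴) → Fin n → Xh)
    (g2 : (Fin m → 𝒱) × (Fin n → 𝒳) → Fin n → Yh),
    0 < t ∧ (n : ℝ) = κs * t ∧ (m : ℝ) = κc * t ∧
    (∑ x : Fin n → 𝒳, ∑ y : Fin n → 𝒴, ∑ u : Fin m → 𝒰, ∑ v : Fin m → 𝒱,
      jscP q qUV f x y u v * ((n : ℝ)⁻¹ * ∑ i, δ1 (x i) (g1 (u, y) i))) ≤ d1 + ε ∧
    (∑ x : Fin n → 𝒳, ∑ y : Fin n → 𝒴, ∑ u : Fin m → 𝒰, ∑ v : Fin m → 𝒱,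
      jscP q qUV f x y u v * ((n : ℝ)⁻¹ * ∑ i, δ2 (y i) (g2 (v, x) i))) ≤ d2 + ε

/-- `(d1,d2)` is achievable by joint source-channel coding with common
reconstructions, source rate `κs` and channel rate `κc`. -/
def CRJSCAchievable (q : 𝒳 × 𝒴 → ℝ) (qUV : 𝒲 → 𝒰 × 𝒱 → ℝ)
    (δ1 : 𝒳 → Xh → ℝ) (δ2 : 𝒴 → Yh → ℝ) (κs κc d1 d2 : ℝ) : Prop :=
  ∀ ε > (0 : ℝ), ∃ (t n m : ℕ) (f : (Fin n → 𝒳) × (Fin n → 𝒴) → Fin m → 𝒲)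
    (g1 : (Fin m → 𝒰) × (Fin n → 𝒴) → Fin n → Xh)
    (g2 : (Fin m → 𝒱) × (Fin n → 𝒳) → Fin n → Yh)
    (φ1 : (Fin m → 𝒰) × (Fin n → 𝒴) → Fin n → Yh)
    (φ2 : (Fin m → 𝒱) × (Fin n → 𝒳) → Fin n → Xh),
    0 < t ∧ (n : ℝ) = κs * t ∧ (m : ℝ) = κc * t ∧
    (∑ x : Fin n → 𝒳, ∑ y : Fin n → 𝒴, ∑ u : Fin m → 𝒰, ∑ v : Fin m → 𝒱,
      jscP q qUV f x y u v * ((n : ℝ)⁻¹ * ∑ i, δ1 (x i) (g1 (u, y) i))) ≤ d1 + ε ∧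
    (∑ x : Fin n → 𝒳, ∑ y : Fin n → 𝒴, ∑ u : Fin m → 𝒰, ∑ v : Fin m → 𝒱,
      jscP q qUV f x y u v * ((n : ℝ)⁻¹ * ∑ i, δ2 (y i) (g2 (v, x) i))) ≤ d2 + ε ∧
    (∑ x : Fin n → 𝒳, ∑ y : Fin n → 𝒴, ∑ u : Fin m → 𝒰, ∑ v : Fin m → 𝒱,
      if φ2 (v, x) = g1 (u, y) then 0 else jscP q qUV f x y u v) ≤ ε ∧
    (∑ x : Fin n → 𝒳, ∑ y : Fin n → 𝒴, ∑ u : Fin m → 𝒰, ∑ v : Fin m → 𝒱,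
      if φ1 (u, y) = g2 (v, x) then 0 else jscP q qUV f x y u v) ≤ ε

/-- `I(W;U)` under the joint law `pW · qUV` (U-marginal of the broadcast channel). -/
def chMIU (qUV : 𝒲 → 𝒰 × 𝒱 → ℝ) (pW : 𝒲 → ℝ) : ℝ :=
  MI (fun t : 𝒲 × 𝒰 => pW t.1 * ∑ v, qUV t.1 (t.2, v))

/-- `I(W;V)` under the joint law `pW · qUV` (V-marginal of the broadcast channel). -/
def chMIV (qUV : 𝒲 → 𝒰 × 𝒱 → ℝ) (pW : 𝒲 → ℝ) : ℝ :=
  MI (fun t : 𝒲 × 𝒱 => pW t.1 * ∑ u, qUV t.1 (u, t.2))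

/-- The doubly symmetric binary source with crossover probability `ρ`. -/
def dsbs (ρ : ℝ) : Bool × Bool → ℝ :=
  fun t => if t.1 = t.2 then (1 - ρ) / 2 else ρ / 2

/-- The Hamming distortion measure. -/
def dHam {α : Type} : α → α → ℝ := fun a b => if a = b then 0 else 1

/-- The binary entropy function (base 2). -/
def binEnt (x : ℝ) : ℝ := -(x * Real.logb 2 x) - (1 - x) * Real.logb 2 (1 - x)

/-- A difference distortion measure built from a per-letter function of the
(modular) difference. -/
def diffD {l : ℕ} (δ : Fin l → ℝ) : Fin l → Fin l → ℝ := fun a b => δ (a - b)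

/-- Capacity of the modulo-additive channel with noise `pN` and input
distortion constraint `d`. -/
def Cadd {l : ℕ} (δ : Fin l → ℝ) (d : ℝ) (pN : Fin l → ℝ) : ℝ :=
  sSup {r : ℝ | ∃ pW : Fin l → ℝ, IsPmf pW ∧ (∑ w, pW w * δ w) ≤ d ∧
    r = MI (fun t : Fin l × Fin l => pW t.1 * pN (t.2 - t.1))}

/-- The minimax (worst-noise) capacity under distortion constraint `d`. -/
def Cworst {l : ℕ} (δ : Fin l → ℝ) (d : ℝ) : ℝ :=
  sInf {r : ℝ | ∃ pN : Fin l → ℝ, IsPmf pN ∧ (∑ x, pN x * δ x) ≤ d ∧ r = Cadd δ d pN}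

/-- Wyner's common information `K(X;Y)` (auxiliary alphabet of size 4). -/
def wynerK (q : 𝒳 × 𝒴 → ℝ) : ℝ :=
  sInf {r : ℝ | ∃ W : 𝒳 × 𝒴 → Fin 4 → ℝ, IsCondPmf W ∧
    Markov (fun t : 𝒳 × Fin 4 × 𝒴 => q (t.1, t.2.2) * W (t.1, t.2.2) t.2.1) ∧
    r = MI (fun t : (𝒳 × 𝒴) × Fin 4 => q t.1 * W t.1 t.2)}

/-- The one-description (Kimura–Uyematsu) upper bound `R_U*(d1,d2)`. -/
def oneDescUB (q : 𝒳 × 𝒴 → ℝ) (δ1 : 𝒳 → Xh → ℝ) (δ2 : 𝒴 → Yh → ℝ) (d1 d2 : ℝ) : ℝ :=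
  sInf {r : ℝ | ∃ W : 𝒳 × 𝒴 → Fin (Fintype.card 𝒳 * Fintype.card 𝒴 + 2) → ℝ,
    IsCondPmf W ∧
    (∃ π1 : Fin (Fintype.card 𝒳 * Fintype.card 𝒴 + 2) × 𝒴 → Xh,
      (∑ x, ∑ y, ∑ c, q (x, y) * W (x, y) c * δ1 x (π1 (c, y))) ≤ d1) ∧
    (∃ π2 : Fin (Fintype.card 𝒳 * Fintype.card 𝒴 + 2) × 𝒳 → Yh,
      (∑ x, ∑ y, ∑ c, q (x, y) * W (x, y) c * δ2 y (π2 (c, x))) ≤ d2) ∧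
    r = max
      (condMI (fun t : 𝒳 × 𝒴 × Fin (Fintype.card 𝒳 * Fintype.card 𝒴 + 2) =>
        q (t.1, t.2.1) * W (t.1, t.2.1) t.2.2))
      (condMI (fun t : 𝒴 × 𝒳 × Fin (Fintype.card 𝒳 * Fintype.card 𝒴 + 2) =>
        q (t.2.1, t.1) * W (t.2.1, t.1) t.2.2))}

end TWR

/-!
Fix a code for receiver 1 of blocklength `n` with `m` messages, and let `p` be the joint law of
`(X, Y, X̂)` at a uniformly random position of the block. The code has distortion `E_p δ(X, X̂)`,
and the channel from `(X, Y)` to `X̂` under `p` is the test channel to be used in `R_{X|Y}`.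

With `ρ(x, y, x̂) = p(x, y, x̂) p(y) / (p(x, y) p(y, x̂))` one has `I(X; X̂ | Y) = E_p log ρ`, so
`n I(X; X̂ | Y)` is the expectation of `log ∏ᵢ ρ(Xᵢ, Yᵢ, X̂ᵢ)` over the block. By Jensen it is at
most `log E ∏ᵢ ρ(Xᵢ, Yᵢ, X̂ᵢ)`. Replace the message actually sent by a sum over all messages: for a
fixed message `X̂` depends on the block of `Y` alone, so the expectation factorises over the
positions and is at most `1`. Hence `n I(X; X̂ | Y) ≤ log m`.

Receiver 2 follows by exchanging the sources, and a compactness argument removes the slack `ε` in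
the definition of achievability.
-/

namespace TWR

lemma sum_mul_logb_le_logb_of_sum_mul_le {α : Type} [Fintype α] {w : α → ℝ} (hw : IsPmf w)
    {T : α → ℝ} (hT : ∀ a, 0 < w a → 0 < T a) {b : ℝ} (hb : 1 < b) {M : ℝ}
    (hM : ∑ a, w a * T a ≤ M) : ∑ a, w a * Real.logb b (T a) ≤ Real.logb b M := by
  set T' : α → ℝ := fun a => if w a = 0 then 1 else T a with hT'
  have hT'pos (a : α) : 0 < T' a := by
    by_cases h : w a = 0
    · simp [hT', h]
    · simpa [hT', h] using hT a ((hw.1 a).lt_of_ne' h)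
  have congr_T' (F : ℝ → ℝ) : ∑ a, w a * F (T a) = ∑ a, w a * F (T' a) := by
    refine Finset.sum_congr rfl fun a _ => ?_
    by_cases h : w a = 0 <;> simp [hT', h]
  have mean_pos : 0 < ∑ a, w a * T' a := by
    simpa using (convex_Ioi (0 : ℝ)).sum_mem (fun a _ => hw.1 a) hw.2 fun a _ => hT'pos a
  have jensen : ∑ a, w a * Real.log (T' a) ≤ Real.log (∑ a, w a * T' a) := by
    simpa using strictConcaveOn_log_Ioi.concaveOn.le_map_sum (fun a _ => hw.1 a) hw.2
      fun a _ => hT'pos a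
  calc ∑ a, w a * Real.logb b (T a)
      = (∑ a, w a * Real.log (T' a)) / Real.log b := by
        rw [← congr_T' Real.log, Finset.sum_div]
        simp only [Real.logb, mul_div_assoc]
    _ ≤ Real.logb b (∑ a, w a * T' a) := by
        rw [Real.logb]
        exact div_le_div_of_nonneg_right jensen (Real.log_pos hb).le
    _ ≤ Real.logb b M :=
        Real.logb_le_logb_of_le hb mean_pos ((congr_T' fun t => t).symm.trans_le hM)

section CondDensity

variable {α β γ : Type} [Fintype α] [Fintype γ] {p : α × β × γ → ℝ}

/-- The ratio `p(a, b, c) p(b) / (p(a, b) p(b, c))`: the density of `p` with respect to the law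
under which `A` and `C` are independent given `B`. Division by zero makes it vanish where one of
the two marginals in the denominator does. -/
def condDensity (p : α × β × γ → ℝ) (t : α × β × γ) : ℝ :=
  p t * (∑ a, ∑ c, p (a, t.2.1, c)) / ((∑ c, p (t.1, t.2.1, c)) * ∑ a, p (a, t.2.1, t.2.2))

lemma condDensity_nonneg (hp : ∀ t, 0 ≤ p t) (t : α × β × γ) : 0 ≤ condDensity p t :=
  div_nonneg (mul_nonneg (hp t) (Finset.sum_nonneg fun _ _ => Finset.sum_nonneg fun _ _ => hp _))
    (mul_nonneg (Finset.sum_nonneg fun _ _ => hp _) (Finset.sum_nonneg fun _ _ => hp _))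

lemma marginals_pos (hp : ∀ t, 0 ≤ p t) {t : α × β × γ} (ht : 0 < p t) :
    0 < ∑ c, p (t.1, t.2.1, c) ∧ 0 < ∑ a, p (a, t.2.1, t.2.2) ∧
      0 < ∑ a, ∑ c, p (a, t.2.1, c) := by
  have hAB : 0 < ∑ c, p (t.1, t.2.1, c) :=
    Finset.sum_pos' (fun _ _ => hp _) ⟨t.2.2, Finset.mem_univ _, ht⟩
  exact ⟨hAB, Finset.sum_pos' (fun _ _ => hp _) ⟨t.1, Finset.mem_univ _, ht⟩,
    Finset.sum_pos' (fun _ _ => Finset.sum_nonneg fun _ _ => hp _) ⟨t.1, Finset.mem_univ _, hAB⟩⟩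

lemma condDensity_pos (hp : ∀ t, 0 ≤ p t) {t : α × β × γ} (ht : 0 < p t) :
    0 < condDensity p t := by
  obtain ⟨hAB, hBC, hB⟩ := marginals_pos hp ht
  exact div_pos (mul_pos ht hB) (mul_pos hAB hBC)

lemma sum_marginal_mul_condDensity_le (hp : ∀ t, 0 ≤ p t) (b : β) (c : γ) :
    ∑ a, (∑ c', p (a, b, c')) * condDensity p (a, b, c) ≤ ∑ a, ∑ c', p (a, b, c') := by
  set pB := ∑ a, ∑ c', p (a, b, c')
  set pBC := ∑ a, p (a, b, c) with hpBC
  have hpB : 0 ≤ pB := Finset.sum_nonneg fun _ _ => Finset.sum_nonneg fun _ _ => hp _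
  have summand_eq (a : α) : (∑ c', p (a, b, c')) * condDensity p (a, b, c) =
      p (a, b, c) * (pB / pBC) := by
    rcases (hp (a, b, c)).eq_or_lt with h | h
    · simp [condDensity, ← h]
    · have hAB := (marginals_pos hp h).1
      rw [condDensity, mul_div_assoc', mul_div_mul_left _ _ hAB.ne', mul_div_assoc]
  calc ∑ a, (∑ c', p (a, b, c')) * condDensity p (a, b, c)
      = pBC * (pB / pBC) := by simp only [summand_eq, ← Finset.sum_mul, hpBC]
    _ = pB * (pBC / pBC) := mul_div_left_comm _ _ _
    _ ≤ pB := mul_le_of_le_one_right hpB (div_self_le_one pBC)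

variable [Fintype β]

lemma condMI_eq_sum_logb (p : α × β × γ → ℝ) :
    condMI p = ∑ t, p t * (Real.logb 2 (p t) + Real.logb 2 (∑ a, ∑ c, p (a, t.2.1, c))
      - Real.logb 2 (∑ c, p (t.1, t.2.1, c)) - Real.logb 2 (∑ a, p (a, t.2.1, t.2.2))) := by
  have entropy_AB : H2 (fun ab : α × β => ∑ c, p (ab.1, ab.2, c)) =
      -∑ t, p t * Real.logb 2 (∑ c, p (t.1, t.2.1, c)) := by
    simp only [H2, Fintype.sum_prod_type, Finset.sum_mul]
  have entropy_BC : H2 (fun bc : β × γ => ∑ a, p (a, bc.1, bc.2)) =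
      -∑ t, p t * Real.logb 2 (∑ a, p (a, t.2.1, t.2.2)) := by
    rw [Fintype.sum_prod_type, Finset.sum_comm]
    simp only [H2, Finset.sum_mul]
  have entropy_B : H2 (fun b : β => ∑ a, ∑ c, p (a, b, c)) =
      -∑ t, p t * Real.logb 2 (∑ a, ∑ c, p (a, t.2.1, c)) := by
    simp only [H2, Fintype.sum_prod_type, Finset.sum_mul]
    rw [Finset.sum_comm]
  rw [condMI, entropy_AB, entropy_BC, entropy_B, H2]
  simp only [mul_sub, mul_add, Finset.sum_sub_distrib, Finset.sum_add_distrib]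
  ring

lemma condMI_eq_sum_mul_logb_condDensity (hp : ∀ t, 0 ≤ p t) :
    condMI p = ∑ t, p t * Real.logb 2 (condDensity p t) := by
  rw [condMI_eq_sum_logb]
  refine Finset.sum_congr rfl fun t _ => ?_
  rcases (hp t).eq_or_lt with h | h
  · simp [← h]
  · obtain ⟨hAB, hBC, hB⟩ := marginals_pos hp h
    rw [condDensity, Real.logb_div (mul_pos h hB).ne' (mul_pos hAB hBC).ne',
      Real.logb_mul h.ne' hB.ne', Real.logb_mul hAB.ne' hBC.ne', sub_sub]

end CondDensity

section Block

variable {𝒳 𝒴 𝒵 : Type} {q : 𝒳 × 𝒴 → ℝ} {n : ℕ}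

/-- The block `xy` with its `i`-th letter pair replaced by `a`. -/
def setLetter (xy : (Fin n → 𝒳) × (Fin n → 𝒴)) (i : Fin n) (a : 𝒳 × 𝒴) :
    (Fin n → 𝒳) × (Fin n → 𝒴) :=
  (Function.update xy.1 i a.1, Function.update xy.2 i a.2)

lemma mul_iid_setLetter (q : 𝒳 × 𝒴 → ℝ) (xy : (Fin n → 𝒳) × (Fin n → 𝒴)) (i : Fin n)
    (a : 𝒳 × 𝒴) : q (xy.1 i, xy.2 i) * iid q n (setLetter xy i a) = q a * iid q n xy := by
  have hne : ∀ j ∈ ({i}ᶜ : Finset (Fin n)),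
      q ((setLetter xy i a).1 j, (setLetter xy i a).2 j) = q (xy.1 j, xy.2 j) := by
    intro j hj
    have hji : j ≠ i := by simpa using hj
    simp [setLetter, hji]
  rw [iid, iid, Fintype.prod_eq_mul_prod_compl i, Fintype.prod_eq_mul_prod_compl i,
    Finset.prod_congr rfl hne]
  simp only [setLetter, Function.update_self]
  ring

lemma iid_nonneg (hq : ∀ a, 0 ≤ q a) (xy : (Fin n → 𝒳) × (Fin n → 𝒴)) : 0 ≤ iid q n xy :=
  Finset.prod_nonneg fun _ _ => hq _

variable [Fintype 𝒳] [Fintype 𝒴]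

lemma isPmf_iid (hq : IsPmf q) (n : ℕ) : IsPmf (iid q n) := by
  refine ⟨iid_nonneg hq.1, ?_⟩
  calc ∑ xy, iid q n xy
      = ∏ _i : Fin n, ∑ x, ∑ y, q (x, y) := by
        simp only [iid, Fintype.sum_prod_type, Fintype.prod_sum]
    _ = 1 := by simp only [← Fintype.sum_prod_type, hq.2, Finset.prod_const_one]

lemma sum_iid_mul_prod_le_one (hq : IsPmf q) {r : 𝒳 × 𝒴 × 𝒵 → ℝ} (hr : ∀ t, 0 ≤ r t)
    (hqr : ∀ y z, ∑ x, q (x, y) * r (x, y, z) ≤ ∑ x, q (x, y))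
    (φ : (Fin n → 𝒴) → Fin n → 𝒵) :
    ∑ xy, iid q n xy * ∏ i, r (xy.1 i, xy.2 i, φ xy.2 i) ≤ 1 :=
  calc ∑ xy, iid q n xy * ∏ i, r (xy.1 i, xy.2 i, φ xy.2 i)
      = ∑ y : Fin n → 𝒴, ∏ i, ∑ x, q (x, y i) * r (x, y i, φ y i) := by
        simp only [iid, ← Finset.prod_mul_distrib, Fintype.sum_prod_type_right, Fintype.prod_sum]
    _ ≤ ∑ y : Fin n → 𝒴, ∏ i, ∑ x, q (x, y i) :=
        Finset.sum_le_sum fun _ _ => Finset.prod_le_prod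
          (fun _ _ => Finset.sum_nonneg fun _ _ => mul_nonneg (hq.1 _) (hr _)) fun _ _ => hqr _ _
    _ = ∑ xy, iid q n xy := by
        simp only [iid, Fintype.sum_prod_type_right, Fintype.prod_sum]
    _ = 1 := (isPmf_iid hq n).2

lemma sum_iid_mul_prod_le_card {ℳ : Type*} [Fintype ℳ] (hq : IsPmf q)
    {r : 𝒳 × 𝒴 × 𝒵 → ℝ} (hr : ∀ t, 0 ≤ r t)
    (hqr : ∀ y z, ∑ x, q (x, y) * r (x, y, z) ≤ ∑ x, q (x, y))
    (f : (Fin n → 𝒳) × (Fin n → 𝒴) → ℳ) (g : ℳ × (Fin n → 𝒴) → Fin n → 𝒵) :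
    ∑ xy, iid q n xy * ∏ i, r (xy.1 i, xy.2 i, g (f xy, xy.2) i) ≤ Fintype.card ℳ :=
  calc ∑ xy, iid q n xy * ∏ i, r (xy.1 i, xy.2 i, g (f xy, xy.2) i)
      ≤ ∑ xy, ∑ w, iid q n xy * ∏ i, r (xy.1 i, xy.2 i, g (w, xy.2) i) :=
        Finset.sum_le_sum fun xy _ => Finset.single_le_sum
          (f := fun w => iid q n xy * ∏ i, r (xy.1 i, xy.2 i, g (w, xy.2) i))
          (fun _ _ => mul_nonneg (iid_nonneg hq.1 xy) (Finset.prod_nonneg fun _ _ => hr _))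
          (Finset.mem_univ (f xy))
    _ = ∑ w, ∑ xy, iid q n xy * ∏ i, r (xy.1 i, xy.2 i, g (w, xy.2) i) := Finset.sum_comm
    _ ≤ ∑ _w : ℳ, 1 :=
        Finset.sum_le_sum fun w _ => sum_iid_mul_prod_le_one hq hr hqr fun y => g (w, y)
    _ = Fintype.card ℳ := by simp

/-- Exchanging a fresh letter pair with the `i`-th one of the block is an involution that preserves
the product law, so redrawing that letter pair does not change expectations. -/
lemma sum_mul_sum_iid_setLetter (hq : ∑ a, q a = 1) (i : Fin n)
    (G : (Fin n → 𝒳) × (Fin n → 𝒴) → ℝ) :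
    ∑ a, q a * ∑ xy, iid q n xy * G (setLetter xy i a) = ∑ xy, iid q n xy * G xy := by
  have exchange_involutive : Function.Involutive
      fun s : (𝒳 × 𝒴) × (Fin n → 𝒳) × (Fin n → 𝒴) =>
        ((s.2.1 i, s.2.2 i), setLetter s.2 i s.1) := by
    rintro ⟨a, x, y⟩
    simp [setLetter]
  calc ∑ a, q a * ∑ xy, iid q n xy * G (setLetter xy i a)
      = ∑ s : (𝒳 × 𝒴) × (Fin n → 𝒳) × (Fin n → 𝒴),
          q s.1 * iid q n s.2 * G (setLetter s.2 i s.1) := by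
        simp only [Fintype.sum_prod_type (α₁ := 𝒳 × 𝒴), Finset.mul_sum, mul_assoc]
    _ = ∑ s : (𝒳 × 𝒴) × (Fin n → 𝒳) × (Fin n → 𝒴), q s.1 * iid q n s.2 * G s.2 :=
        Fintype.sum_equiv exchange_involutive.toPerm _ _ fun s => by
          simp only [Function.Involutive.coe_toPerm, mul_iid_setLetter]
    _ = ∑ xy, iid q n xy * G xy := by
        rw [Fintype.sum_prod_type (α₁ := 𝒳 × 𝒴)]
        simp only [mul_assoc, ← Finset.mul_sum, ← Finset.sum_mul, hq, one_mul]

end Block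

section TestChannel

variable {𝒳 𝒴 𝒵 : Type} {q : 𝒳 × 𝒴 → ℝ} {n : ℕ}

/-- The joint law of `(X, Y, Z)` when `(X, Y)` has law `q` and `Z` is the output of the channel
`W`. -/
def jointLaw (q : 𝒳 × 𝒴 → ℝ) (W : 𝒳 × 𝒴 → 𝒵 → ℝ) (t : 𝒳 × 𝒴 × 𝒵) : ℝ :=
  q (t.1, t.2.1) * W (t.1, t.2.1) t.2.2

lemma jointLaw_nonneg [Fintype 𝒵] (hq : ∀ a, 0 ≤ q a) {W : 𝒳 × 𝒴 → 𝒵 → ℝ} (hW : IsCondPmf W)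
    (t : 𝒳 × 𝒴 × 𝒵) : 0 ≤ jointLaw q W t :=
  mul_nonneg (hq _) ((hW _).1 _)

lemma sum_jointLaw [Fintype 𝒵] {W : 𝒳 × 𝒴 → 𝒵 → ℝ} (hW : IsCondPmf W) (x : 𝒳) (y : 𝒴) :
    ∑ z, jointLaw q W (x, y, z) = q (x, y) := by
  simp only [jointLaw, ← Finset.mul_sum, (hW _).2, mul_one]

variable [Fintype 𝒳] [Fintype 𝒴]

/-- The test channel of the blockwise reproduction `h`: the law of the reproduction at a uniformly
random position of an i.i.d. block, given the letter pair at that position. Conditioning is encoded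
by overwriting that letter pair, which makes sense also for letter pairs of probability zero. -/
def testChannel (q : 𝒳 × 𝒴 → ℝ) (h : (Fin n → 𝒳) × (Fin n → 𝒴) → Fin n → 𝒵)
    (a : 𝒳 × 𝒴) (z : 𝒵) : ℝ :=
  ∑ xy, iid q n xy * ((n : ℝ)⁻¹ * ∑ i, if h (setLetter xy i a) i = z then 1 else 0)

lemma isCondPmf_testChannel [Fintype 𝒵] (hq : IsPmf q) (hn : 0 < n)
    (h : (Fin n → 𝒳) × (Fin n → 𝒴) → Fin n → 𝒵) : IsCondPmf (testChannel q h) := by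
  refine fun a => ⟨fun z => Finset.sum_nonneg fun xy _ => mul_nonneg (iid_nonneg hq.1 xy) ?_, ?_⟩
  · exact mul_nonneg (by positivity) (Finset.sum_nonneg fun i _ => by positivity)
  · have sum_indicators (xy : (Fin n → 𝒳) × (Fin n → 𝒴)) :
        ∑ z, (n : ℝ)⁻¹ * ∑ i, (if h (setLetter xy i a) i = z then (1 : ℝ) else 0) = 1 := by
      rw [← Finset.mul_sum, Finset.sum_comm]
      simp [hn.ne']
    simp only [testChannel]
    rw [Finset.sum_comm]
    simp only [← Finset.mul_sum, sum_indicators, mul_one, (isPmf_iid hq n).2]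

lemma jointLaw_testChannel (hq : ∑ a, q a = 1) (h : (Fin n → 𝒳) × (Fin n → 𝒴) → Fin n → 𝒵)
    (t : 𝒳 × 𝒴 × 𝒵) :
    jointLaw q (testChannel q h) t =
      ∑ xy, iid q n xy * ((n : ℝ)⁻¹ * ∑ i, if (xy.1 i, xy.2 i, h xy i) = t then 1 else 0) := by
  obtain ⟨x, y, z⟩ := t
  have redraw (i : Fin n) :
      q (x, y) * ∑ xy, iid q n xy * (if h (setLetter xy i (x, y)) i = z then 1 else 0) =
        ∑ xy, iid q n xy * (if (xy.1 i, xy.2 i, h xy i) = (x, y, z) then 1 else 0) := by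
    rw [← sum_mul_sum_iid_setLetter hq i
      fun xy => if (xy.1 i, xy.2 i, h xy i) = (x, y, z) then 1 else 0,
      Finset.sum_eq_single (x, y)]
    · simp only [setLetter, Function.update_self, Prod.mk.injEq, true_and]
      -- the indicators on the two sides carry different decidability instances
      congr!
    · rintro ⟨x', y'⟩ - hne
      have triple_ne (z' : 𝒵) : (x', y', z') ≠ (x, y, z) := by
        rintro ⟨⟩
        exact hne rfl
      simp [setLetter, triple_ne, -Prod.mk.injEq]
    · simp
  have average (I : (Fin n → 𝒳) × (Fin n → 𝒴) → Fin n → ℝ) :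
      ∑ xy, iid q n xy * ((n : ℝ)⁻¹ * ∑ i, I xy i) =
        (n : ℝ)⁻¹ * ∑ i, ∑ xy, iid q n xy * I xy i := by
    rw [Finset.sum_comm, Finset.mul_sum]
    simp only [Finset.mul_sum, mul_left_comm]
  rw [jointLaw, testChannel, average, average, mul_left_comm, Finset.mul_sum]
  simp only [redraw]

lemma jointLaw_testChannel_pos (hq : IsPmf q) (h : (Fin n → 𝒳) × (Fin n → 𝒴) → Fin n → 𝒵)
    {xy : (Fin n → 𝒳) × (Fin n → 𝒴)} (hxy : 0 < iid q n xy) (i : Fin n) :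
    0 < jointLaw q (testChannel q h) (xy.1 i, xy.2 i, h xy i) := by
  have hn : 0 < (n : ℝ)⁻¹ := by
    have := i.pos
    positivity
  rw [jointLaw_testChannel hq.2]
  refine Finset.sum_pos' (fun xy' _ => mul_nonneg (iid_nonneg hq.1 xy') ?_)
    ⟨xy, Finset.mem_univ _, mul_pos hxy (mul_pos hn ?_)⟩
  · exact mul_nonneg hn.le (Finset.sum_nonneg fun j _ => by positivity)
  · exact Finset.sum_pos' (fun j _ => by positivity) ⟨i, Finset.mem_univ _, by simp⟩

variable [Fintype 𝒵]

lemma sum_jointLaw_testChannel_mul (hq : ∑ a, q a = 1)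
    (h : (Fin n → 𝒳) × (Fin n → 𝒴) → Fin n → 𝒵) (F : 𝒳 × 𝒴 × 𝒵 → ℝ) :
    ∑ t, jointLaw q (testChannel q h) t * F t =
      ∑ xy, iid q n xy * ((n : ℝ)⁻¹ * ∑ i, F (xy.1 i, xy.2 i, h xy i)) := by
  simp only [jointLaw_testChannel hq, Finset.sum_mul]
  rw [Finset.sum_comm]
  refine Finset.sum_congr rfl fun xy _ => ?_
  simp only [mul_assoc, ← Finset.mul_sum, Finset.sum_mul]
  rw [Finset.sum_comm]
  simp

lemma condMI_jointLaw_testChannel_le {ℳ : Type*} [Fintype ℳ] (hq : IsPmf q) (hn : 0 < n)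
    (f : (Fin n → 𝒳) × (Fin n → 𝒴) → ℳ) (g : ℳ × (Fin n → 𝒴) → Fin n → 𝒵) :
    condMI (jointLaw q (testChannel q fun xy => g (f xy, xy.2))) ≤
      Real.logb 2 (Fintype.card ℳ) / n := by
  set h : (Fin n → 𝒳) × (Fin n → 𝒴) → Fin n → 𝒵 := fun xy => g (f xy, xy.2)
  set p := jointLaw q (testChannel q h)
  have hW : IsCondPmf (testChannel q h) := isCondPmf_testChannel hq hn h
  have hp : ∀ t, 0 ≤ p t := jointLaw_nonneg hq.1 hW
  have density_pos {xy : (Fin n → 𝒳) × (Fin n → 𝒴)} (hxy : 0 < iid q n xy) (i : Fin n) :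
      0 < condDensity p (xy.1 i, xy.2 i, h xy i) :=
    condDensity_pos hp (jointLaw_testChannel_pos hq h hxy i)
  have sum_logb (xy : (Fin n → 𝒳) × (Fin n → 𝒴)) :
      iid q n xy * ((n : ℝ)⁻¹ * ∑ i, Real.logb 2 (condDensity p (xy.1 i, xy.2 i, h xy i))) =
        (n : ℝ)⁻¹ *
          (iid q n xy * Real.logb 2 (∏ i, condDensity p (xy.1 i, xy.2 i, h xy i))) := by
    rcases (iid_nonneg hq.1 xy).eq_or_lt with hxy | hxy
    · simp [← hxy]
    · rw [Real.logb_prod _ _ fun i _ => (density_pos hxy i).ne', mul_left_comm]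
  have mass_le : ∑ xy, iid q n xy * ∏ i, condDensity p (xy.1 i, xy.2 i, h xy i) ≤
      Fintype.card ℳ := by
    refine sum_iid_mul_prod_le_card hq (condDensity_nonneg hp) (fun y z => ?_) f g
    simpa only [p, sum_jointLaw hW] using sum_marginal_mul_condDensity_le hp y z
  calc condMI p
      = (n : ℝ)⁻¹ *
          ∑ xy, iid q n xy * Real.logb 2 (∏ i, condDensity p (xy.1 i, xy.2 i, h xy i)) := by
        rw [condMI_eq_sum_mul_logb_condDensity hp, sum_jointLaw_testChannel_mul hq.2,
          Finset.mul_sum, Finset.sum_congr rfl fun xy _ => sum_logb xy]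
    _ ≤ (n : ℝ)⁻¹ * Real.logb 2 (Fintype.card ℳ) := by
        gcongr
        exact sum_mul_logb_le_logb_of_sum_mul_le (isPmf_iid hq n)
          (fun xy hxy => Finset.prod_pos fun i _ => density_pos hxy i) one_lt_two mass_le
    _ = Real.logb 2 (Fintype.card ℳ) / n := inv_mul_eq_div _ _

end TestChannel

section CondRD

variable {𝒳 𝒴 𝒵 : Type} [Fintype 𝒳] [Fintype 𝒴] [Fintype 𝒵]

lemma continuous_H2 {α : Type} [Fintype α] : Continuous (H2 : (α → ℝ) → ℝ) := by
  have H2_eq : (H2 : (α → ℝ) → ℝ) = fun p => (∑ a, Real.negMulLog (p a)) / Real.log 2 := by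
    funext p
    simp only [H2, Real.logb, Real.negMulLog, mul_div_assoc', ← Finset.sum_div, neg_mul,
      Finset.sum_neg_distrib, neg_div]
  rw [H2_eq]
  fun_prop

lemma continuous_condMI_jointLaw (q : 𝒳 × 𝒴 → ℝ) :
    Continuous fun W : 𝒳 × 𝒴 → 𝒵 → ℝ => condMI (jointLaw q W) := by
  unfold condMI jointLaw
  have := @continuous_H2
  fun_prop

lemma isCompact_setOf_isCondPmf {α β : Type} [Fintype β] :
    IsCompact {W : α → β → ℝ | IsCondPmf W} := by
  have eq_pi : {W : α → β → ℝ | IsCondPmf W} = Set.univ.pi fun _ => stdSimplex ℝ β := by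
    ext W
    simp only [Set.mem_univ_pi]
    rfl
  rw [eq_pi]
  exact isCompact_univ_pi fun _ => isCompact_stdSimplex ℝ β

lemma condRD_le_condMI {q : 𝒳 × 𝒴 → ℝ} {δ : 𝒳 → 𝒵 → ℝ} {d : ℝ} {W : 𝒳 × 𝒴 → 𝒵 → ℝ}
    (hW : IsCondPmf W) (hd : ∑ t, jointLaw q W t * δ t.1 t.2.2 ≤ d) :
    condRD q δ d ≤ condMI (jointLaw q W) := by
  refine csInf_le ?_ ⟨W, hW, by simpa only [Fintype.sum_prod_type, jointLaw] using hd, rfl⟩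
  refine (isCompact_setOf_isCondPmf.image
    (continuous_condMI_jointLaw (𝒵 := 𝒵) q)).bddBelow.mono ?_
  rintro _ ⟨V, hV, -, rfl⟩
  exact ⟨V, hV, rfl⟩

lemma condRD_le_of_forall_pos {q : 𝒳 × 𝒴 → ℝ} {δ : 𝒳 → 𝒵 → ℝ} {d r : ℝ}
    (happrox : ∀ ε > 0, ∃ W : 𝒳 × 𝒴 → 𝒵 → ℝ, IsCondPmf W ∧
      ∑ t, jointLaw q W t * δ t.1 t.2.2 ≤ d + ε ∧ condMI (jointLaw q W) ≤ r + ε) :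
    condRD q δ d ≤ r := by
  let excess (W : 𝒳 × 𝒴 → 𝒵 → ℝ) : ℝ :=
    max (∑ t, jointLaw q W t * δ t.1 t.2.2 - d) (condMI (jointLaw q W) - r)
  have continuous_excess : Continuous excess := by
    refine .max (.sub ?_ continuous_const) ((continuous_condMI_jointLaw q).sub continuous_const)
    unfold jointLaw
    fun_prop
  have nonempty : {W : 𝒳 × 𝒴 → 𝒵 → ℝ | IsCondPmf W}.Nonempty :=
    (happrox 1 one_pos).imp fun _ h => h.1
  obtain ⟨V, hV, hmin⟩ :=
    isCompact_setOf_isCondPmf.exists_isMinOn nonempty continuous_excess.continuousOn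
  have excess_nonpos : excess V ≤ 0 := by
    refine le_of_forall_pos_le_add fun ε hε => ?_
    obtain ⟨W, hW, hd, hr⟩ := happrox ε hε
    exact (hmin hW).trans (max_le (by linarith) (by linarith))
  obtain ⟨hd, hr⟩ := max_le_iff.1 excess_nonpos
  exact (condRD_le_condMI hV (sub_nonpos.1 hd)).trans (sub_nonpos.1 hr)

end CondRD

section Achievable

variable {𝒳 𝒴 Xh Yh : Type} [Fintype 𝒳] [Fintype 𝒴] {q : 𝒳 × 𝒴 → ℝ} {δ1 : 𝒳 → Xh → ℝ}
  {δ2 : 𝒴 → Yh → ℝ} {d1 d2 r : ℝ}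

lemma isPmf_swap (hq : IsPmf q) : IsPmf (swap q) :=
  ⟨fun _ => hq.1 _, (Equiv.sum_comp (Equiv.prodComm 𝒴 𝒳) q).trans hq.2⟩

lemma RDAchievable.swap (h : RDAchievable q δ1 δ2 d1 d2 r) :
    RDAchievable (swap q) δ2 δ1 d2 d1 r := by
  intro ε hε
  obtain ⟨n, m, f, g1, g2, hn, hrate, hd1, hd2⟩ := h ε hε
  refine ⟨n, m, fun yx => f yx.swap, g2, g1, hn, hrate, le_of_eq_of_le ?_ hd2,
    le_of_eq_of_le ?_ hd1⟩
  · exact Fintype.sum_equiv (Equiv.prodComm _ _) _ _ fun _ => rfl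
  · exact Fintype.sum_equiv (Equiv.prodComm _ _) _ _ fun _ => rfl

lemma condRD_le_of_RDAchievable [Fintype Xh] (hq : IsPmf q)
    (h : RDAchievable q δ1 δ2 d1 d2 r) : condRD q δ1 d1 ≤ r := by
  refine condRD_le_of_forall_pos fun ε hε => ?_
  obtain ⟨n, m, f, g1, -, hn, hrate, hd1, -⟩ := h ε hε
  refine ⟨testChannel q fun xy => g1 (f xy, xy.2), isCondPmf_testChannel hq hn _, ?_, ?_⟩
  · rwa [sum_jointLaw_testChannel_mul hq.2]
  · have converse := condMI_jointLaw_testChannel_le hq hn f g1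
    rw [Fintype.card_fin] at converse
    exact converse.trans hrate

lemma max_condRD_le_of_RDAchievable [Fintype Xh] [Fintype Yh] (hq : IsPmf q)
    (h : RDAchievable q δ1 δ2 d1 d2 r) : max (condRD q δ1 d1) (condRD (swap q) δ2 d2) ≤ r :=
  max_le (condRD_le_of_RDAchievable hq h) (condRD_le_of_RDAchievable (isPmf_swap hq) h.swap)

lemma sum_iid_mul_le {n : ℕ} {d : ℝ} (hq : IsPmf q) {F : (Fin n → 𝒳) × (Fin n → 𝒴) → ℝ}
    (hF : ∀ xy, F xy ≤ d) : ∑ xy, iid q n xy * F xy ≤ d :=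
  calc ∑ xy, iid q n xy * F xy
      ≤ ∑ xy, iid q n xy * d :=
        Finset.sum_le_sum fun xy _ => mul_le_mul_of_nonneg_left (hF xy) (iid_nonneg hq.1 xy)
    _ = d := by rw [← Finset.sum_mul, (isPmf_iid hq n).2, one_mul]

/-- Witnessed by the code of blocklength one that sends the source pair uncompressed. -/
lemma exists_RDAchievable (hq : IsPmf q) (h1 : ∀ x, ∃ xh, δ1 x xh ≤ d1)
    (h2 : ∀ y, ∃ yh, δ2 y yh ≤ d2) : ∃ r, 0 ≤ r ∧ RDAchievable q δ1 δ2 d1 d2 r := by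
  choose u hu using h1
  choose v hv using h2
  let e := Fintype.equivFin ((Fin 1 → 𝒳) × (Fin 1 → 𝒴))
  refine ⟨max 0 (Real.logb 2 (Fintype.card ((Fin 1 → 𝒳) × (Fin 1 → 𝒴)))), le_max_left _ _,
    fun ε hε => ⟨1, _, e, fun w i => u ((e.symm w.1).1 i), fun w i => v ((e.symm w.1).2 i),
      one_pos, ?_, ?_, ?_⟩⟩
  · rw [Nat.cast_one, div_one]
    exact (le_max_right _ _).trans (le_add_of_nonneg_right hε.le)
  · exact (sum_iid_mul_le hq fun xy => by simpa using hu (xy.1 0)).trans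
      (le_add_of_nonneg_right hε.le)
  · exact (sum_iid_mul_le hq fun xy => by simpa using hv (xy.2 0)).trans
      (le_add_of_nonneg_right hε.le)

end Achievable

end TWR

open TWR in
theorem rd_cutset_lower_bound_general
    {𝒳 𝒴 Xh Yh : Type} [Fintype 𝒳] [Fintype 𝒴] [Fintype Xh] [Fintype Yh]
    (q : 𝒳 × 𝒴 → ℝ) (hq : IsPmf q) (δ1 : 𝒳 → Xh → ℝ) (δ2 : 𝒴 → Yh → ℝ) (d1 d2 : ℝ)
    (h1 : ∀ x, ∃ xh, δ1 x xh ≤ d1) (h2 : ∀ y, ∃ yh, δ2 y yh ≤ d2) :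
    max (condRD q δ1 d1) (condRD (swap q) δ2 d2) ≤ RD q δ1 δ2 d1 d2 :=
  le_csInf (exists_RDAchievable hq h1 h2) fun _ hr => max_condRD_le_of_RDAchievable hq hr.2

open TWR in
/-- Proposition 2: the cut-set lower bound
`R(d1,d2) ≥ max{R_{X|Y}(d1), R_{Y|X}(d2)}`. -/
theorem rd_cutset_lower_bound
    {𝒳 𝒴 Xh Yh : Type} [Fintype 𝒳] [Fintype 𝒴] [Fintype Xh] [Fintype Yh]
    (q : 𝒳 × 𝒴 → ℝ) (hq : IsPmf q)
    (δ1 : 𝒳 → Xh → ℝ) (δ2 : 𝒴 → Yh → ℝ) (d1max d2max : ℝ)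
    (hδ1 : ∀ x xh, 0 ≤ δ1 x xh ∧ δ1 x xh ≤ d1max)
    (hδ2 : ∀ y yh, 0 ≤ δ2 y yh ∧ δ2 y yh ≤ d2max)
    (hδ1n : ∀ x, ∃ xh, δ1 x xh = 0) (hδ2n : ∀ y, ∃ yh, δ2 y yh = 0)
    (d1 d2 : ℝ) (hd1 : 0 ≤ d1) (hd2 : 0 ≤ d2) :
    max (condRD q δ1 d1) (condRD (swap q) δ2 d2) ≤ RD q δ1 δ2 d1 d2 := by
  exact rd_cutset_lower_bound_general q hq δ1 δ2 d1 d2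
    (fun x => (hδ1n x).imp fun _ h => h.trans_le hd1)
    (fun y => (hδ2n y).imp fun _ h => h.trans_le hd2)
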